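/- Let M_1,…,M_m be n×n real matrices. If there exists no single permutation of {0,…,n−1} that is simultaneously an a-Monge permutation for all of M_1,…,M_m, then there exists a set B of indices with |B| ≤ 4 such that no permutation of B is simultaneously an a-Monge permutation for all of the principal submatrices M_1[B],…,M_m[B]. -/

import Mathlib

/-- A square matrix indexed by a linearly ordered type is a-Monge if
`M i k + M j l ≥ M i l + M j k` whenever `i < j` and `k < l`. -/
def AMonge {ι : Type*} [LinearOrder ι] (M : ι → ι → ℝ) : Prop :=
  ∀ i j k l : ι, i < j → k < l → M i l + M j k ≤ M i k + M j l

/-- The mixed second difference `M a c + M b d - M a d - M b c` of a matrix. -/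
def crossDiff {α : Type*} (M : α → α → ℝ) (a b c d : α) : ℝ :=
  M a c + M b d - M a d - M b c

/-- The ranking `r` arranges the points of `B` so that `M` restricted to `B` is a-Monge. -/
def IsMongeRank {α : Type*} (M : α → α → ℝ) (B : Set α) (r : α → ℤ) : Prop :=
  ∀ ⦃a⦄, a ∈ B → ∀ ⦃b⦄, b ∈ B → ∀ ⦃c⦄, c ∈ B → ∀ ⦃d⦄, d ∈ B →
    r a ≤ r b → r c ≤ r d → 0 ≤ crossDiff M a b c d

section crossDiff

variable {α : Type*} {N : α → α → ℝ}

lemma crossDiff_swap (a b c d : α) : crossDiff N b a d c = crossDiff N a b c d := by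
  simp only [crossDiff]; ring

lemma crossDiff_swap_left (a b c d : α) : crossDiff N b a c d = -crossDiff N a b c d := by
  simp only [crossDiff]; ring

lemma crossDiff_swap_right (a b c d : α) : crossDiff N a b d c = -crossDiff N a b c d := by
  simp only [crossDiff]; ring

lemma crossDiff_comm (hs : ∀ a b, N a b = N b a) (a b c d : α) :
    crossDiff N c d a b = crossDiff N a b c d := by
  simp only [crossDiff, hs c a, hs d b, hs c b, hs d a]; ring

lemma crossDiff_add_left (a b c d e : α) :
    crossDiff N a c d e = crossDiff N a b d e + crossDiff N b c d e := by
  simp only [crossDiff]; ring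

lemma crossDiff_add_right (a b c d e : α) :
    crossDiff N d e a c = crossDiff N d e a b + crossDiff N d e b c := by
  simp only [crossDiff]; ring

lemma crossDiff_add_self (hs : ∀ a b, N a b = N b a) (a b c : α) :
    crossDiff N a c a c =
      crossDiff N a b a b + crossDiff N b c b c + 2 * crossDiff N a b b c := by
  simp only [crossDiff, hs b a, hs c a, hs c b]; ring

/-- Reversing a Monge ranking gives a Monge ranking, so two given points can be put in order. -/
lemma exists_isMongeRank_le {B : Set α} (h : ∃ r, IsMongeRank N B r) (p q : α) :
    ∃ r, IsMongeRank N B r ∧ r p ≤ r q := by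
  obtain ⟨r, hr⟩ := h
  rcases le_total (r p) (r q) with hpq | hqp
  · exact ⟨r, hr, hpq⟩
  · refine ⟨fun a => -r a, fun a ha b hb c hc d hd hab hcd => ?_, by simpa using hqp⟩
    rw [← crossDiff_swap]
    exact hr hb ha hd hc (by simpa using hab) (by simpa using hcd)

lemma crossDiff_self_nonneg (hG : ∀ p q s t, ∃ r, IsMongeRank N {p, q, s, t} r) (a b : α) :
    0 ≤ crossDiff N a b a b := by
  obtain ⟨r, hr, hab⟩ := exists_isMongeRank_le (hG a b a b) a b
  exact hr (by simp) (by simp) (by simp) (by simp) hab hab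

/-- If `q` lies between `p` and `w` in a Monge ranking but `p, w` are no farther apart than
`p, q`, then the step from `q` to `w` is negligible against any `u`. -/
lemma crossDiff_nonpos_of_self_le (hs : ∀ a b, N a b = N b a) {B : Set α} {r : α → ℤ}
    (hr : IsMongeRank N B r) {p q w u : α} (hp : p ∈ B) (hq : q ∈ B) (hw : w ∈ B) (hu : u ∈ B)
    (hpq : r p ≤ r q) (hqw : r q ≤ r w)
    (hpw : crossDiff N p w p w ≤ crossDiff N p q p q)
    (huw' : crossDiff N u w u w ≤ crossDiff N p q p q) :
    crossDiff N q w u w ≤ 0 := by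
  have h₁ := hr hq hw hq hw hqw hqw
  have h₂ := hr hp hq hq hw hpq hqw
  have h₃ := crossDiff_add_self hs p q w
  have h₄ := crossDiff_add_right (N := N) u q w q w
  rcases le_total (r q) (r u) with hqu | huq
  · have := hr hq hw hq hu hqw hqu
    rw [crossDiff_swap_right] at this
    linarith
  · rcases le_total (r p) (r u) with hpu | hup
    · have h₅ := hr hp hu hq hw hpu hqw
      have h₆ := crossDiff_add_left (N := N) p u q q w
      have h₇ := crossDiff_comm hs u q q w
      linarith
    · have h₅ := hr hu hp hq hw hup hqw
      have h₆ := crossDiff_add_self hs u p w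
      have h₇ := crossDiff_add_right (N := N) p q w u p
      have h₈ := hr hu hp hu hp hup hup
      have h₉ := hr hu hp hp hq hup hpq
      have h₁₀ := crossDiff_add_left (N := N) u p q q w
      have h₁₁ := crossDiff_comm hs u q q w
      have h₁₂ := crossDiff_comm hs u p q w
      linarith

/-- If `x, y` are at maximal distance and `c` precedes `d` in the direction from `x` to `y`,
then it does so in the direction from `x` to `c`. -/
lemma crossDiff_source_nonneg (hs : ∀ a b, N a b = N b a)
    (hG : ∀ p q s t, ∃ r, IsMongeRank N {p, q, s, t} r) {x y : α}
    (hmax : ∀ a b, crossDiff N a b a b ≤ crossDiff N x y x y)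
    {c d : α} (h : 0 ≤ crossDiff N x y c d) :
    0 ≤ crossDiff N x c c d := by
  obtain ⟨r, hr, hxc⟩ := exists_isMongeRank_le (hG x y c d) x c
  have hx : x ∈ ({x, y, c, d} : Set α) := by simp
  have hy : y ∈ ({x, y, c, d} : Set α) := by simp
  have hc : c ∈ ({x, y, c, d} : Set α) := by simp
  have hd : d ∈ ({x, y, c, d} : Set α) := by simp
  rcases le_total (r c) (r d) with hcd | hdc
  · exact hr hx hc hc hd hxc hcd
  rcases le_total (r x) (r y) with hxy | hyx
  · have h₁ := crossDiff_add_left (N := N) x y c c d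
    rcases le_total (r c) (r y) with hcy | hyc
    · have h₂ := hr hc hy hd hc hcy hdc
      rw [crossDiff_swap_right, crossDiff_swap_left] at h₂
      linarith
    · have h₂ := crossDiff_nonpos_of_self_le hs hr hx hy hc hd hxy hyc
        (hmax _ _) (hmax _ _)
      rw [crossDiff_swap_right] at h₂
      linarith
  · have hmax' : ∀ a b, crossDiff N a b a b ≤ crossDiff N y x y x := fun a b => by
      rw [crossDiff_swap x y]; exact hmax a b
    have h₂ := crossDiff_nonpos_of_self_le hs hr hy hx hc hd hyx hxc
      (hmax' _ _) (hmax' _ _)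
    rw [crossDiff_swap_right] at h₂
    linarith

/-- If `c, d, e` appear in this order when seen from `x`, and `c, d` are at positive distance,
then the steps from `c` to `d` and from `d` to `e` have the same direction. -/
lemma crossDiff_consecutive_nonneg_of_self_pos (hs : ∀ a b, N a b = N b a)
    (hG : ∀ p q s t, ∃ r, IsMongeRank N {p, q, s, t} r)
    {x c d e : α} (h₁ : 0 ≤ crossDiff N x c c d)
    (h₂ : 0 ≤ crossDiff N x d d e) (hpos : 0 < crossDiff N c d c d) :
    0 ≤ crossDiff N c d d e := by
  obtain ⟨r, hr, hcd⟩ := exists_isMongeRank_le (hG x c d e) c d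
  have hx : x ∈ ({x, c, d, e} : Set α) := by simp
  have hc : c ∈ ({x, c, d, e} : Set α) := by simp
  have hd : d ∈ ({x, c, d, e} : Set α) := by simp
  have he : e ∈ ({x, c, d, e} : Set α) := by simp
  by_contra! hneg
  have hed : r e ≤ r d := by
    by_contra! hde
    exact hneg.not_ge (hr hc hd hd he hcd hde.le)
  have h₃ := crossDiff_add_left (N := N) x c d c d
  have hxd : r x ≤ r d := by
    by_contra! hdx
    have := hr hd hx hc hd hdx.le hcd
    rw [crossDiff_swap_left] at this
    linarith
  have h₄ := hr hx hd he hd hxd hed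
  rw [crossDiff_swap_right] at h₄
  have h₅ := crossDiff_add_left (N := N) c x d d e
  have hcx : r c ≤ r x := by
    by_contra! hxc
    have := hr hx hc he hd hxc.le hed
    rw [crossDiff_swap_right, crossDiff_swap_left] at this
    linarith
  have h₆ := crossDiff_swap_left (N := N) x c c d
  have h₇ := crossDiff_add_right (N := N) c e d c x
  have h₈ := crossDiff_swap_right (N := N) c x d e
  have h₉ : 0 ≤ crossDiff N c x c e := by
    rcases le_total (r c) (r e) with hce | hec
    · exact hr hc hx hc he hcx hce
    · have h₁₀ := hr hx hd he hx hxd (hec.trans hcx)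
      have h₁₁ := hr hx hd hx hd hxd hxd
      have h₁₂ := crossDiff_add_right (N := N) e x d x d
      have h₁₃ := crossDiff_swap_right (N := N) x d d e
      have h₁₄ := crossDiff_add_self hs x c d
      have h₁₅ := crossDiff_self_nonneg hG x c
      linarith
  linarith

/-- Consecutive steps in the direction of a pair at maximal distance agree. -/
lemma crossDiff_consecutive_nonneg (hs : ∀ a b, N a b = N b a)
    (hG : ∀ p q s t, ∃ r, IsMongeRank N {p, q, s, t} r) {x y : α}
    (hmax : ∀ a b, crossDiff N a b a b ≤ crossDiff N x y x y)
    {c d e : α} (hcd : 0 ≤ crossDiff N x y c d)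
    (hde : 0 ≤ crossDiff N x y d e) : 0 ≤ crossDiff N c d d e := by
  have hmax' : ∀ a b, crossDiff N a b a b ≤ crossDiff N y x y x := fun a b => by
    rw [crossDiff_swap x y]; exact hmax a b
  rcases (crossDiff_self_nonneg hG c d).lt_or_eq with hpos | hcd₀
  · exact crossDiff_consecutive_nonneg_of_self_pos hs hG
      (crossDiff_source_nonneg hs hG hmax hcd) (crossDiff_source_nonneg hs hG hmax hde) hpos
  rcases (crossDiff_self_nonneg hG e d).lt_or_eq with hpos | hde₀
  · rw [← crossDiff_swap] at hcd hde
    have := crossDiff_consecutive_nonneg_of_self_pos hs hG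
      (crossDiff_source_nonneg hs hG hmax' hde) (crossDiff_source_nonneg hs hG hmax' hcd) hpos
    rwa [← crossDiff_swap, crossDiff_comm hs] at this
  rw [← crossDiff_swap] at hde₀
  have h₁ := crossDiff_add_self hs c d e
  have h₂ := crossDiff_self_nonneg hG c e
  linarith

/-- Disjoint steps in the direction of a pair at maximal distance agree. -/
lemma crossDiff_separated_nonneg (hs : ∀ a b, N a b = N b a)
    (hG : ∀ p q s t, ∃ r, IsMongeRank N {p, q, s, t} r) {x y : α}
    (hmax : ∀ a b, crossDiff N a b a b ≤ crossDiff N x y x y)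
    {c d e f : α} (hcd : 0 ≤ crossDiff N x y c d)
    (hde : 0 ≤ crossDiff N x y d e) (hef : 0 ≤ crossDiff N x y e f) :
    0 ≤ crossDiff N c d e f := by
  obtain ⟨r, hr, hcd'⟩ := exists_isMongeRank_le (hG c d e f) c d
  have hc : c ∈ ({c, d, e, f} : Set α) := by simp
  have hd : d ∈ ({c, d, e, f} : Set α) := by simp
  have he : e ∈ ({c, d, e, f} : Set α) := by simp
  have hf : f ∈ ({c, d, e, f} : Set α) := by simp
  by_contra! hneg
  have h₁ := crossDiff_consecutive_nonneg hs hG hmax hcd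
    (by rw [crossDiff_add_right d e f]; exact add_nonneg hde hef)
  have h₂ := crossDiff_consecutive_nonneg hs hG hmax
    (by rw [crossDiff_add_right c d e]; exact add_nonneg hcd hde) hef
  rw [crossDiff_add_right d e f] at h₁
  rw [crossDiff_add_left c d e] at h₂
  have hfe : r f ≤ r e := by
    by_contra! hlt
    exact hneg.not_ge (hr hc hd he hf hcd' hlt.le)
  rcases le_total (r d) (r e) with hle | hle
  · have := hr hd he hf he hle hfe
    rw [crossDiff_swap_right] at this
    linarith
  · have := hr hc hd he hd hcd' hle
    rw [crossDiff_swap_right] at this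
    linarith

/-- Sorting all points in the direction of a pair at maximal distance is a Monge arrangement. -/
lemma crossDiff_nonneg_of_diameter (hs : ∀ a b, N a b = N b a)
    (hG : ∀ p q s t, ∃ r, IsMongeRank N {p, q, s, t} r) {x y : α}
    (hmax : ∀ a b, crossDiff N a b a b ≤ crossDiff N x y x y)
    {a b c d : α} (hab : 0 ≤ crossDiff N x y a b)
    (hcd : 0 ≤ crossDiff N x y c d) : 0 ≤ crossDiff N a b c d := by
  have total : ∀ p q, 0 ≤ crossDiff N x y p q ∨ 0 ≤ crossDiff N x y q p := fun p q => by
    rw [crossDiff_swap_right x y p q]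
    simpa using le_total 0 _
  wlog hac : 0 ≤ crossDiff N x y a c generalizing a b c d
  · rw [← crossDiff_comm hs]
    exact this hcd hab ((total a c).resolve_left hac)
  rcases total b c with hbc | hcb
  · exact crossDiff_separated_nonneg hs hG hmax hab hbc hcd
  rw [crossDiff_add_left a c b]
  refine add_nonneg (crossDiff_consecutive_nonneg hs hG hmax hac hcd) ?_
  rcases total b d with hbd | hdb
  · rw [crossDiff_add_right c b d]
    exact add_nonneg (crossDiff_self_nonneg hG c b)
      (crossDiff_consecutive_nonneg hs hG hmax hcb hbd)
  · rw [crossDiff_add_left c d b, crossDiff_comm hs c d d b]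
    exact add_nonneg (crossDiff_self_nonneg hG c d)
      (crossDiff_consecutive_nonneg hs hG hmax hcd hdb)

end crossDiff

/-- A permutation making principal submatrices a-Monge yields a common Monge ranking. -/
lemma exists_isMongeRank_of_perm {m n : ℕ} (M : Fin m → Fin n → Fin n → ℝ) (B : Finset (Fin n))
    (h : ∃ σ : Equiv.Perm ↥B, ∀ i : Fin m, AMonge (fun a b : ↥B => M i (σ a).1 (σ b).1)) :
    ∃ r, ∀ i, IsMongeRank (M i) (B : Set (Fin n)) r := by
  obtain ⟨σ, hσ⟩ := h
  let r : Fin n → ℤ := fun a => if ha : a ∈ B then ((σ.symm ⟨a, ha⟩).1.val : ℤ) else 0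
  have hr : ∀ a b (ha : a ∈ B) (hb : b ∈ B), r a ≤ r b →
      a = b ∨ σ.symm ⟨a, ha⟩ < σ.symm ⟨b, hb⟩ := by
    intro a b ha hb hab
    simp only [r, ha, hb, dite_true, Nat.cast_le] at hab
    have hab' : σ.symm ⟨a, ha⟩ ≤ σ.symm ⟨b, hb⟩ := hab
    rcases hab'.eq_or_lt with heq | hlt
    · exact Or.inl (congrArg Subtype.val (σ.symm.injective heq))
    · exact Or.inr hlt
  refine ⟨r, fun i a ha b hb c hc d hd hab hcd => ?_⟩
  rcases hr a b ha hb hab with rfl | hab'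
  · simp only [crossDiff]; linarith
  rcases hr c d hc hd hcd with rfl | hcd'
  · simp only [crossDiff]; linarith
  have := hσ i _ _ _ _ hab' hcd'
  simp only [Equiv.apply_symm_apply] at this
  simp only [crossDiff]; linarith

/-- If no single permutation of `{0,…,n−1}` is simultaneously an
a-Monge permutation for all the matrices `M₁,…,Mₘ`, then there is a set `B` of at
most `4` indices such that no permutation of `B` is simultaneously an a-Monge
permutation for all the principal submatrices `M₁[B],…,Mₘ[B]`. -/
theorem no_common_aMonge_perm_small_submatrices
    {m n : ℕ} (M : Fin m → Fin n → Fin n → ℝ)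
    (h : ¬ ∃ π : Equiv.Perm (Fin n),
          ∀ i : Fin m, AMonge (fun a b => M i (π a) (π b))) :
    ∃ B : Finset (Fin n), B.card ≤ 4 ∧
      ¬ ∃ σ : Equiv.Perm ↥B,
          ∀ i : Fin m, AMonge (fun a b : ↥B => M i (σ a).1 (σ b).1) := by
  by_contra! hB
  apply h
  have hrank : ∀ p q s t : Fin n, ∃ r, ∀ i, IsMongeRank (M i) {p, q, s, t} r := by
    intro p q s t
    simpa using exists_isMongeRank_of_perm M {p, q, s, t} (hB _ Finset.card_le_four)
  let N : Fin n → Fin n → ℝ := fun a b => ∑ i, (M i a b + M i b a)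
  have hs : ∀ a b, N a b = N b a := fun a b => Finset.sum_congr rfl fun i _ => add_comm _ _
  have hN : ∀ a b c d, crossDiff N a b c d =
      ∑ i, (crossDiff (M i) a b c d + crossDiff (M i) c d a b) := by
    intro a b c d
    simp only [crossDiff, N, ← Finset.sum_add_distrib, ← Finset.sum_sub_distrib]
    exact Finset.sum_congr rfl fun i _ => by ring
  have hG : ∀ p q s t, ∃ r, IsMongeRank N {p, q, s, t} r := by
    intro p q s t
    obtain ⟨r, hr⟩ := hrank p q s t
    refine ⟨r, fun a ha b hb c hc d hd hab hcd => ?_⟩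
    rw [hN]
    exact Finset.sum_nonneg fun i _ =>
      add_nonneg (hr i ha hb hc hd hab hcd) (hr i hc hd ha hb hcd hab)
  rcases isEmpty_or_nonempty (Fin n) with hn | hn
  · exact ⟨1, fun i a => hn.elim a⟩
  obtain ⟨⟨x, y⟩, hxy⟩ :=
    Finite.exists_max fun p : Fin n × Fin n => crossDiff N p.1 p.2 p.1 p.2
  have hmax : ∀ a b, crossDiff N a b a b ≤ crossDiff N x y x y := fun a b => hxy (a, b)
  let π := Tuple.sort fun a => crossDiff N x y x a
  have hπ : ∀ a b, a < b → 0 ≤ crossDiff N x y (π a) (π b) := by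
    intro a b hab
    have h₁ := Tuple.monotone_sort (fun a => crossDiff N x y x a) hab.le
    have h₂ := crossDiff_add_right (N := N) x (π a) (π b) x y
    simp only [Function.comp_apply] at h₁
    linarith
  refine ⟨π, fun i a b c d hab hcd => ?_⟩
  have hpos := crossDiff_nonneg_of_diameter hs hG hmax (hπ a b hab) (hπ c d hcd)
  suffices 0 ≤ crossDiff (M i) (π a) (π b) (π c) (π d) by
    simp only [crossDiff] at this
    linarith
  by_contra! hneg
  refine hpos.not_gt ?_
  obtain ⟨r, hr⟩ := hrank (π a) (π b) (π c) (π d)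
  -- the ranking of the four points must order the two pairs oppositely
  have hopp : ∀ j, 0 ≤ crossDiff (M j) (π a) (π b) (π d) (π c) ∧
      0 ≤ crossDiff (M j) (π d) (π c) (π a) (π b) := by
    intro j
    rcases le_total (r (π a)) (r (π b)) with h₁ | h₁ <;>
      rcases le_total (r (π c)) (r (π d)) with h₂ | h₂
    · exact absurd (hr i (by simp) (by simp) (by simp) (by simp) h₁ h₂) hneg.not_ge
    · exact ⟨hr j (by simp) (by simp) (by simp) (by simp) h₁ h₂,
        hr j (by simp) (by simp) (by simp) (by simp) h₂ h₁⟩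
    · rw [← crossDiff_swap, ← crossDiff_swap (π d)]
      exact ⟨hr j (by simp) (by simp) (by simp) (by simp) h₁ h₂,
        hr j (by simp) (by simp) (by simp) (by simp) h₂ h₁⟩
    · have := hr i (by simp) (by simp) (by simp) (by simp) h₁ h₂
      rw [crossDiff_swap] at this
      exact absurd this hneg.not_ge
  have hle : ∀ j, crossDiff (M j) (π a) (π b) (π c) (π d) ≤ 0 ∧
      crossDiff (M j) (π c) (π d) (π a) (π b) ≤ 0 := fun j => by
    have := hopp j
    rwa [crossDiff_swap_right, crossDiff_swap_left (π c), neg_nonneg, neg_nonneg] at this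
  rw [hN]
  exact Finset.sum_neg' (fun j _ => add_nonpos (hle j).1 (hle j).2)
    ⟨i, Finset.mem_univ i, add_neg_of_neg_of_nonpos hneg (hle i).2⟩
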